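/- Let K be a field, B = K[x_1,…,x_n] with n > 0, φ: B → B a K-algebra endomorphism with A = φ(B), and set m = 2^n deg(φ)^{n−1} (n + deg(φ)^n). The following are equivalent: (i) φ is integral, i.e. B is integral over A; (ii) for each i = 1,…,n there exists a nonzero monic polynomial F_i ∈ A[T] of degree deg(φ)^n whose coefficients lie in φ(B_{≤m}) such that F_i(x_i) = 0. -/

import Mathlib

/-- The degree of a `K`-algebra endomorphism `φ` of the polynomial ring `K[x_1, …, x_n]`:
`deg(φ) = max {deg f_1, …, deg f_n}` where `f_i = φ(x_i)` and `deg` is total degree. -/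
noncomputable def polyDeg {K : Type*} [CommSemiring K] {n : ℕ}
    (φ : MvPolynomial (Fin n) K →ₐ[K] MvPolynomial (Fin n) K) : ℕ :=
  Finset.univ.sup fun i : Fin n => (φ (MvPolynomial.X i)).totalDegree

/-!
Write `B = K[x₁, …, xₙ]` and `d = deg φ`, and suppose that `φ` is integral. Comparing transcendence
degrees, `φ` is injective, so `d > 0`. Powers `x_i ^ j` with `j ≤ d ^ n`, multiplied by elements of
`φ(B_{≤ N})`, land in `B_{≤ d N + d ^ n}`. For `N = 2 ^ n d ^ (n - 1) (n + d ^ n)` the dimension of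
this target is smaller than `(d ^ n + 1) dim B_{≤ N}`, so `x_i` is a root of a nonzero polynomial
`P` of degree at most `d ^ n` whose coefficients come from `B_{≤ N}`. Since `B` is integrally
closed, the minimal polynomial of `x_i` over `B` (acting through `φ`) divides `P`. The maximal
total degree of the coefficients cannot grow under passage to a divisor, so the minimal polynomial,
multiplied by a power of `T`, is the required equation. Conversely, the `x_i` generate `B`.
-/

section Counting

theorem pow_mul_ascFactorial_le_pow_mul_ascFactorial {p q a b : ℕ} (hab : q * a ≤ p * b)
    (hqp : q ≤ p) (n : ℕ) : q ^ n * a.ascFactorial n ≤ p ^ n * b.ascFactorial n := by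
  induction n with
  | zero => simp
  | succ n ih =>
    have factor_le : q * (a + n) ≤ p * (b + n) := by
      rw [mul_add, mul_add]
      gcongr
    calc q ^ (n + 1) * a.ascFactorial (n + 1)
        = (q * (a + n)) * (q ^ n * a.ascFactorial n) := by rw [Nat.ascFactorial_succ]; ring
      _ ≤ (p * (b + n)) * (p ^ n * b.ascFactorial n) := Nat.mul_le_mul factor_le ih
      _ = p ^ (n + 1) * b.ascFactorial (n + 1) := by rw [Nat.ascFactorial_succ]; ring

theorem pow_mul_choose_le_pow_mul_choose {p q a b : ℕ} (hab : q * a ≤ p * b) (hqp : q ≤ p)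
    (n : ℕ) : q ^ n * (a + n).choose n ≤ p ^ n * (b + n).choose n := by
  have succ_le : q * (a + 1) ≤ p * (b + 1) := by
    rw [mul_add, mul_add]
    gcongr
  have factorial_mul_le := pow_mul_ascFactorial_le_pow_mul_ascFactorial succ_le hqp n
  simp only [Nat.ascFactorial_eq_factorial_mul_choose, mul_left_comm _ n.factorial]
    at factorial_mul_le
  exact Nat.le_of_mul_le_mul_left factorial_mul_le n.factorial_pos

theorem mul_succ_pow_lt_succ_mul_pow {D M n : ℕ} (h : n * (D + 1) ≤ M) :
    D * (M + 1) ^ n < (D + 1) * M ^ n := by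
  have bernoulli : ((M : ℤ) + 1) ^ n * (M + 1 - n) ≤ M ^ n * (M + 1) := by
    have hpow : (n : ℤ) * (M + 1) ^ (n - 1) * (M + 1) = n * (M + 1) ^ n := by
      cases n with
      | zero => simp
      | succ k => rw [Nat.add_sub_cancel, mul_assoc, ← pow_succ]
    have hbern := pow_add_mul_le_add_pow (a := (M : ℤ) + 1) (b := -1)
      (by positivity) (by linarith) n
    rw [add_neg_cancel_right] at hbern
    nlinarith
  have slack : (D : ℤ) * (M + 1) < (D + 1) * (M + 1 - n) := by
    zify at h
    linarith
  zify
  refine lt_of_mul_lt_mul_right (a := (M : ℤ) + 1) ?_ (by positivity)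
  calc (D : ℤ) * (M + 1) ^ n * (M + 1) = (M + 1) ^ n * (D * (M + 1)) := by ring
    _ < (M + 1) ^ n * ((D + 1) * (M + 1 - n)) := by gcongr
    _ = (D + 1) * ((M + 1) ^ n * (M + 1 - n)) := by ring
    _ ≤ (D + 1) * (M ^ n * (M + 1)) := by gcongr
    _ = (D + 1) * M ^ n * (M + 1) := by ring

theorem choose_lt_succ_pow_mul_choose {d n M : ℕ} (hd : 0 < d) (hn : n ≠ 0)
    (hM : n * (d ^ n + 1) ≤ M) :
    (d * (M * d ^ (n - 1)) + d ^ n + n).choose n <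
      (d ^ n + 1) * (M * d ^ (n - 1) + n).choose n := by
  have ratio_eq :
      M * (d * (M * d ^ (n - 1)) + d ^ n) = d * (M + 1) * (M * d ^ (n - 1)) := by
    rw [← mul_pow_sub_one hn d]
    ring
  have choose_pos : 0 < (M * d ^ (n - 1) + n).choose n := Nat.choose_pos (Nat.le_add_left _ _)
  refine lt_of_mul_lt_mul_left (a := M ^ n) ?_ (Nat.zero_le _)
  calc M ^ n * (d * (M * d ^ (n - 1)) + d ^ n + n).choose n
      ≤ (d * (M + 1)) ^ n * (M * d ^ (n - 1) + n).choose n :=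
        pow_mul_choose_le_pow_mul_choose ratio_eq.le (by nlinarith only [hd]) n
    _ = d ^ n * (M + 1) ^ n * (M * d ^ (n - 1) + n).choose n := by rw [mul_pow]
    _ < (d ^ n + 1) * M ^ n * (M * d ^ (n - 1) + n).choose n :=
        Nat.mul_lt_mul_of_pos_right (mul_succ_pow_lt_succ_mul_pow hM) choose_pos
    _ = M ^ n * ((d ^ n + 1) * (M * d ^ (n - 1) + n).choose n) := by ring

theorem card_finsupp_sum_le (σ : Type*) [Fintype σ] (N : ℕ) :
    Nat.card {s : σ →₀ ℕ | (s.sum fun _ e => e) ≤ N} =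
      (N + Fintype.card σ).choose (Fintype.card σ) := by
  classical
  have eq_biUnion : {s : σ →₀ ℕ | (s.sum fun _ e => e) ≤ N} =
      ((Finset.range (N + 1)).biUnion (Finset.univ : Finset σ).finsuppAntidiag :
        Finset (σ →₀ ℕ)) := by
    ext s
    simp [Finset.mem_finsuppAntidiag, Finsupp.sum_fintype]
  rw [eq_biUnion, Nat.card_coe_set_eq, Set.ncard_coe_finset, Finset.card_biUnion]
  · simp only [Finset.card_finsuppAntidiag_nat_eq_multichoose, Finset.card_univ,
      Nat.sum_range_multichoose]
  · intro k _ l _ hkl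
    refine Finset.disjoint_left.2 fun s hk hl => hkl ?_
    rw [Finset.mem_finsuppAntidiag] at hk hl
    exact hk.1.symm.trans hl.1

end Counting

section TotalDegree

open MvPolynomial
open scoped Polynomial

variable {σ τ R : Type*}

theorem finrank_restrictTotalDegree (σ R : Type*) [Fintype σ] [CommSemiring R]
    [StrongRankCondition R] (N : ℕ) :
    Module.finrank R (restrictTotalDegree σ R N) =
      (N + Fintype.card σ).choose (Fintype.card σ) :=
  (Module.finrank_eq_nat_card_basis (basisRestrictSupport R _)).trans (card_finsupp_sum_le σ N)

theorem totalDegree_algHom_apply_le [CommSemiring R]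
    (φ : MvPolynomial σ R →ₐ[R] MvPolynomial τ R) {d : ℕ}
    (hφ : ∀ i, (φ (X i)).totalDegree ≤ d) (p : MvPolynomial σ R) :
    (φ p).totalDegree ≤ d * p.totalDegree := by
  have monomial_le (s : σ →₀ ℕ) (a : R) :
      (φ (monomial s a)).totalDegree ≤ d * s.sum fun _ e => e := by
    rw [monomial_eq, map_mul, ← algebraMap_eq, AlgHom.commutes, algebraMap_eq, Finsupp.prod,
      map_prod, Finsupp.sum, Finset.mul_sum]
    refine (totalDegree_mul _ _).trans ?_
    rw [totalDegree_C, zero_add]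
    refine (totalDegree_finsetProd _ _).trans (Finset.sum_le_sum fun i _ => ?_)
    rw [map_pow, mul_comm]
    exact (totalDegree_pow _ _).trans (Nat.mul_le_mul_left _ (hφ i))
  conv_lhs => rw [p.as_sum, map_sum]
  exact totalDegree_finsetSum_le fun s hs =>
    (monomial_le s _).trans (Nat.mul_le_mul_left _ (le_totalDegree hs))

/-- The isomorphism `R[xᵢ : i ∈ σ][T] ≃ R[T][xᵢ : i ∈ σ]` exchanging the order of adjunction. It
turns a common bound for the total degrees of the coefficients of a polynomial in `T` into a bound
for a single total degree. -/
noncomputable def polynomialMvPolynomialComm (σ R : Type*) [CommSemiring R] :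
    (MvPolynomial σ R)[X] ≃ₐ[R] MvPolynomial σ R[X] :=
  (optionEquivLeft R σ).symm.trans (optionEquivRight R σ)

theorem polynomialMvPolynomialComm_C [CommSemiring R] (a : MvPolynomial σ R) :
    polynomialMvPolynomialComm σ R (Polynomial.C a) = map Polynomial.C a := by
  induction a using MvPolynomial.induction_on <;> simp_all [polynomialMvPolynomialComm]

theorem polynomialMvPolynomialComm_X [CommSemiring R] :
    polynomialMvPolynomialComm σ R Polynomial.X = C Polynomial.X := by
  simp [polynomialMvPolynomialComm]

theorem coeff_coeff_polynomialMvPolynomialComm [CommSemiring R] (P : (MvPolynomial σ R)[X])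
    (s : σ →₀ ℕ) (j : ℕ) :
    ((polynomialMvPolynomialComm σ R P).coeff s).coeff j = (P.coeff j).coeff s := by
  induction P using Polynomial.induction_on' with
  | add p q hp hq => simp only [map_add, coeff_add, Polynomial.coeff_add, hp, hq]
  | monomial k a =>
    rw [← Polynomial.C_mul_X_pow_eq_monomial, map_mul, map_pow, polynomialMvPolynomialComm_C,
      polynomialMvPolynomialComm_X, ← map_pow, mul_comm, coeff_C_mul, coeff_map, mul_comm,
      Polynomial.coeff_C_mul_X_pow, Polynomial.coeff_C_mul_X_pow]
    split_ifs <;> simp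

theorem totalDegree_polynomialMvPolynomialComm_le_iff [CommSemiring R]
    {P : (MvPolynomial σ R)[X]} {N : ℕ} :
    (polynomialMvPolynomialComm σ R P).totalDegree ≤ N ↔
      ∀ j, (P.coeff j).totalDegree ≤ N := by
  simp only [totalDegree, Finset.sup_le_iff, mem_support_iff, ne_eq, Polynomial.ext_iff,
    coeff_coeff_polynomialMvPolynomialComm, Polynomial.coeff_zero, not_forall]
  grind

theorem totalDegree_coeff_le_of_dvd [CommRing R] [IsDomain R] {P Q : (MvPolynomial σ R)[X]}
    {N : ℕ} (hP : P ≠ 0) (hQP : Q ∣ P) (hN : ∀ j, (P.coeff j).totalDegree ≤ N) (j : ℕ) :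
    (Q.coeff j).totalDegree ≤ N := by
  have totalDegree_le := totalDegree_le_of_dvd_of_isDomain
    (map_dvd (polynomialMvPolynomialComm σ R) hQP) ((map_ne_zero_iff _ (AlgEquiv.injective _)).2 hP)
  exact totalDegree_polynomialMvPolynomialComm_le_iff.1
    (totalDegree_le.trans (totalDegree_polynomialMvPolynomialComm_le_iff.2 hN)) j

end TotalDegree

section Relation

open MvPolynomial
open scoped Polynomial

theorem exists_ne_zero_eval₂_eq_zero_of_finrank_lt {R A B : Type*} [CommRing R] [Nontrivial R]
    [CommRing A] [Algebra R A] [CommRing B] [Algebra R B] (φ : A →ₐ[R] B) (b : B)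
    (V : Submodule R A) [Module.Free R V] [Module.Finite R V]
    (W : Submodule R B) [Module.Finite R W] {m : ℕ}
    (hVW : ∀ v ∈ V, ∀ j ≤ m, φ v * b ^ j ∈ W)
    (hrank : Module.finrank R W < (m + 1) * Module.finrank R V) :
    ∃ P : A[X], P ≠ 0 ∧ P.natDegree ≤ m ∧ (∀ j, P.coeff j ∈ V) ∧
      P.eval₂ (φ : A →+* B) b = 0 := by
  let evalMap : (Fin (m + 1) → V) →ₗ[R] B :=
    ∑ j : Fin (m + 1),
      LinearMap.mulRight R (b ^ (j : ℕ)) ∘ₗ φ.toLinearMap ∘ₗ V.subtype ∘ₗ LinearMap.proj j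
  have evalMap_apply (v : Fin (m + 1) → V) : evalMap v = ∑ j, φ (v j) * b ^ (j : ℕ) := by
    simp [evalMap, LinearMap.sum_apply]
  have evalMap_mem (v : Fin (m + 1) → V) : evalMap v ∈ W := by
    rw [evalMap_apply]
    exact W.sum_mem fun j _ => hVW _ (v j).2 _ (Nat.lt_succ_iff.1 j.2)
  have not_injective : ¬ Function.Injective (evalMap.codRestrict W evalMap_mem) := fun hinj => by
    have finrank_le := LinearMap.finrank_le_finrank_of_injective hinj
    rw [Module.finrank_pi_fintype, Finset.sum_const, Finset.card_univ, Fintype.card_fin,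
      smul_eq_mul] at finrank_le
    exact hrank.not_ge finrank_le
  obtain ⟨v, hv, v_ne_zero⟩ : ∃ v, evalMap v = 0 ∧ v ≠ 0 := by
    simpa [injective_iff_map_eq_zero, Subtype.ext_iff] using not_injective
  let P := (Polynomial.degreeLTEquiv A (m + 1)).symm fun j => (v j : A)
  have coeff_P (j : Fin (m + 1)) : (P : A[X]).coeff j = v j :=
    congrFun ((Polynomial.degreeLTEquiv A (m + 1)).apply_symm_apply _) j
  have degree_P : (P : A[X]).degree < (m + 1 : ℕ) := Polynomial.mem_degreeLT.1 P.2
  refine ⟨P, fun hP => v_ne_zero ?_, ?_, fun j => ?_, ?_⟩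
  · ext j
    simp [← coeff_P, hP]
  · exact Polynomial.natDegree_le_of_degree_le (Order.lt_succ_iff.1 (by exact_mod_cast degree_P))
  · rcases lt_or_ge j (m + 1) with hj | hj
    · exact coeff_P ⟨j, hj⟩ ▸ (v ⟨j, hj⟩).2
    · rw [Polynomial.coeff_eq_zero_of_degree_lt (degree_P.trans_le (by exact_mod_cast hj))]
      exact V.zero_mem
  · rw [Polynomial.eval₂_eq_sum, ← Polynomial.sum_fin _ (by simp) degree_P, ← hv, evalMap_apply]
    simp [coeff_P]

theorem exists_ne_zero_eval₂_eq_zero_of_choose_lt {σ τ R : Type*} [Fintype σ] [Fintype τ]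
    [CommRing R] [Nontrivial R] (φ : MvPolynomial σ R →ₐ[R] MvPolynomial τ R)
    {d : ℕ} (hφ : ∀ i, (φ (X i)).totalDegree ≤ d)
    {b : MvPolynomial τ R} {e : ℕ} (hb : b.totalDegree ≤ e) {m N : ℕ}
    (hchoose : (d * N + m * e + Fintype.card τ).choose (Fintype.card τ) <
      (m + 1) * (N + Fintype.card σ).choose (Fintype.card σ)) :
    ∃ P : (MvPolynomial σ R)[X], P ≠ 0 ∧ P.natDegree ≤ m ∧
      (∀ j, (P.coeff j).totalDegree ≤ N) ∧
      P.eval₂ (φ : MvPolynomial σ R →+* MvPolynomial τ R) b = 0 := by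
  have : Module.Free R (restrictTotalDegree σ R N) := .of_basis (basisRestrictSupport R _)
  simp only [← mem_restrictTotalDegree]
  refine exists_ne_zero_eval₂_eq_zero_of_finrank_lt φ b (restrictTotalDegree σ R N)
    (restrictTotalDegree τ R (d * N + m * e)) (fun v hv j hj => ?_) ?_
  · rw [mem_restrictTotalDegree] at hv ⊢
    calc (φ v * b ^ j).totalDegree ≤ (φ v).totalDegree + (b ^ j).totalDegree := totalDegree_mul _ _
      _ ≤ d * v.totalDegree + j * b.totalDegree :=
        add_le_add (totalDegree_algHom_apply_le φ hφ v) (totalDegree_pow b j)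
      _ ≤ d * N + m * e := by gcongr
  · rwa [finrank_restrictTotalDegree, finrank_restrictTotalDegree]

end Relation

universe u v

section Integral

open MvPolynomial
open scoped Polynomial Cardinal

variable {σ R S : Type*} [CommRing R] [CommRing S]

theorem isIntegralElem_iff_exists_monic_coeff_mem_range {f : R →+* S} {x : S} :
    f.IsIntegralElem x ↔
      ∃ F : S[X], F.Monic ∧ (∀ k, F.coeff k ∈ Set.range f) ∧ F.eval x = 0 := by
  constructor
  · rintro ⟨G, G_monic, hG⟩
    exact ⟨G.map f, G_monic.map f, fun k => ⟨_, (G.coeff_map f k).symm⟩, by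
      rwa [Polynomial.eval_map]⟩
  · rintro ⟨F, F_monic, hcoeff, hF⟩
    obtain ⟨G, rfl, -, G_monic⟩ := Polynomial.lifts_and_natDegree_eq_and_monic
      ((Polynomial.lifts_iff_coeff_lifts F).2 hcoeff) F_monic
    exact ⟨G, G_monic, by rwa [← Polynomial.eval_map]⟩

theorem isIntegral_of_forall_isIntegralElem_X {A : Type*} [CommRing A] [Algebra R A]
    (φ : A →ₐ[R] MvPolynomial σ R)
    (hX : ∀ i, (φ : A →+* MvPolynomial σ R).IsIntegralElem (X i)) :
    (φ : A →+* MvPolynomial σ R).IsIntegral := by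
  intro b
  induction b using MvPolynomial.induction_on with
  | C a =>
    have : C a = (φ : A →+* MvPolynomial σ R) (algebraMap R A a) := (φ.commutes a).symm
    rw [this]
    exact RingHom.isIntegralElem_map _
  | add p q hp hq => exact RingHom.IsIntegralElem.add _ hp hq
  | mul_X p i hp => exact RingHom.IsIntegralElem.mul _ hp (hX i)

instance isIntegrallyClosed_mvPolynomial [IsDomain R] [IsIntegrallyClosed R] :
    IsIntegrallyClosed (MvPolynomial σ R) := by
  let L := FractionRing R
  let _ : Algebra (MvPolynomial σ R) (MvPolynomial σ L) := algebraMvPolynomial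
  have : IsIntegrallyClosed (MvPolynomial σ L) := UniqueFactorizationMonoid.instIsIntegrallyClosed
  suffices IsIntegrallyClosedIn (MvPolynomial σ R) (MvPolynomial σ L) from
    .of_isIntegrallyClosed_of_isIntegrallyClosedIn _ (MvPolynomial σ L)
  refine isIntegrallyClosedIn_iff.2 ⟨map_injective _ (IsFractionRing.injective R L), ?_⟩
  refine fun {p} hp => mem_range_map_iff_coeffs_subset.2 fun a ha => ?_
  obtain ⟨s, -, rfl⟩ := mem_coeffs_iff.1 ha
  exact IsIntegrallyClosed.isIntegral_iff.1 (isIntegral_iff_isIntegral_coeff.1 hp s)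

theorem exists_monic_dvd_eval₂_eq_zero [IsDomain R] [IsIntegrallyClosed R] [IsDomain S]
    {f : R →+* S} (hf : Function.Injective f) {x : S} (hx : f.IsIntegralElem x)
    {P : R[X]} (hP : P.eval₂ f x = 0) :
    ∃ Q : R[X], Q.Monic ∧ Q ∣ P ∧ Q.eval₂ f x = 0 := by
  let _ := f.toAlgebra
  have : Module.IsTorsionFree R S := Module.isTorsionFree_iff_algebraMap_injective.2 hf
  exact ⟨minpoly R x, minpoly.monic hx, minpoly.isIntegrallyClosed_dvd hx hP, minpoly.aeval R x⟩

theorem exists_monic_natDegree_eq_totalDegree_coeff_le [IsDomain R] [IsIntegrallyClosed R]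
    [IsDomain S] {f : MvPolynomial σ R →+* S} (hf : Function.Injective f) {x : S}
    (hx : f.IsIntegralElem x) {P : (MvPolynomial σ R)[X]} (P_ne_zero : P ≠ 0)
    (hP : P.eval₂ f x = 0) {m N : ℕ} (hm : P.natDegree ≤ m)
    (hN : ∀ j, (P.coeff j).totalDegree ≤ N) :
    ∃ Q : (MvPolynomial σ R)[X], Q.Monic ∧ Q.natDegree = m ∧
      (∀ j, (Q.coeff j).totalDegree ≤ N) ∧ Q.eval₂ f x = 0 := by
  obtain ⟨Q, Q_monic, Q_dvd, hQ⟩ := exists_monic_dvd_eval₂_eq_zero hf hx hP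
  have natDegree_le : Q.natDegree ≤ m :=
    (Polynomial.natDegree_le_of_dvd Q_dvd P_ne_zero).trans hm
  refine ⟨Q * Polynomial.X ^ (m - Q.natDegree), Q_monic.mul (Polynomial.monic_X_pow _), ?_,
    fun j => ?_, ?_⟩
  · rw [Q_monic.natDegree_mul (Polynomial.monic_X_pow _), Polynomial.natDegree_X_pow]
    omega
  · rw [Polynomial.coeff_mul_X_pow']
    split_ifs
    · exact totalDegree_coeff_le_of_dvd P_ne_zero Q_dvd hN _
    · simp
  · rw [Polynomial.eval₂_mul, hQ, zero_mul]

theorem injective_of_isIntegral_of_card_le_trdeg {ι : Type u} {A : Type v} [Finite ι] [CommRing A]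
    [IsDomain A] [Algebra R A] [FaithfulSMul R A] (φ : MvPolynomial ι R →ₐ[R] A)
    (hφ : (φ : MvPolynomial ι R →+* A).IsIntegral)
    (hcard : Cardinal.lift.{v} #ι ≤ Cardinal.lift.{u} (Algebra.trdeg R A)) :
    Function.Injective φ := by
  have : Algebra.IsIntegral (Algebra.adjoin R (Set.range fun i => φ (X i))) A := by
    have range_eq : Algebra.adjoin R (Set.range fun i => φ (X i)) = φ.range := by
      rw [Algebra.adjoin_range_eq_range_aeval]
      exact congrArg AlgHom.range (aeval_unique φ).symm
    rw [range_eq]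
    exact algebraMap_isIntegral_iff.1 (RingHom.IsIntegral.tower_top φ.rangeRestrict.toRingHom _ hφ)
  have basis := Algebra.IsAlgebraic.isTranscendenceBasis_of_lift_le_trdeg_of_finite R
    (fun i => φ (X i)) hcard
  rw [aeval_unique φ]
  exact algebraicIndependent_iff_injective_aeval.1 basis.1

end Integral

section Endomorphism

open MvPolynomial
open scoped Polynomial

theorem totalDegree_apply_X_le_polyDeg {K : Type*} [CommSemiring K] {n : ℕ}
    (φ : MvPolynomial (Fin n) K →ₐ[K] MvPolynomial (Fin n) K) (i : Fin n) :
    (φ (X i)).totalDegree ≤ polyDeg φ :=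
  Finset.le_sup (f := fun i => (φ (X i)).totalDegree) (Finset.mem_univ i)

theorem totalDegree_apply_X_pos_of_injective {σ τ R : Type*} [CommSemiring R] [Nontrivial R]
    {φ : MvPolynomial σ R →ₐ[R] MvPolynomial τ R} (hφ : Function.Injective φ) (i : σ) :
    0 < (φ (X i)).totalDegree := by
  refine Nat.pos_of_ne_zero fun h => ?_
  have apply_X_eq : φ (X i) = φ (C (coeff 0 (φ (X i)))) := by
    rw [← algebraMap_eq, AlgHom.commutes, algebraMap_eq]
    exact totalDegree_eq_zero_iff_eq_C.1 h
  simpa using congrArg totalDegree (hφ apply_X_eq)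

variable {K : Type*} [CommRing K] [IsDomain K] {n : ℕ}
  (φ : MvPolynomial (Fin n) K →ₐ[K] MvPolynomial (Fin n) K)

theorem injective_of_isIntegral
    (hφ : (φ : MvPolynomial (Fin n) K →+* MvPolynomial (Fin n) K).IsIntegral) :
    Function.Injective φ :=
  injective_of_isIntegral_of_card_le_trdeg φ hφ (by simp)

theorem exists_bounded_monic_of_isIntegral [IsIntegrallyClosed K]
    (hφ : (φ : MvPolynomial (Fin n) K →+* MvPolynomial (Fin n) K).IsIntegral) (i : Fin n) :
    ∃ Q : (MvPolynomial (Fin n) K)[X], Q.Monic ∧ Q.natDegree = polyDeg φ ^ n ∧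
      (∀ k, (Q.coeff k).totalDegree ≤ 2 ^ n * polyDeg φ ^ (n - 1) * (n + polyDeg φ ^ n)) ∧
      Q.eval₂ (φ : MvPolynomial (Fin n) K →+* MvPolynomial (Fin n) K) (X i) = 0 := by
  have φ_injective := injective_of_isIntegral φ hφ
  have polyDeg_pos : 0 < polyDeg φ :=
    (totalDegree_apply_X_pos_of_injective φ_injective i).trans_le
      (totalDegree_apply_X_le_polyDeg φ i)
  have n_pos : 0 < n := i.pos
  have le_two_pow_mul : n * (polyDeg φ ^ n + 1) ≤ 2 ^ n * (n + polyDeg φ ^ n) :=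
    Nat.mul_le_mul Nat.lt_two_pow_self.le (by omega)
  have choose_lt := choose_lt_succ_pow_mul_choose polyDeg_pos n_pos.ne' le_two_pow_mul
  rw [mul_right_comm] at choose_lt
  obtain ⟨P, P_ne_zero, P_natDegree, P_coeff, hP⟩ :=
    exists_ne_zero_eval₂_eq_zero_of_choose_lt φ (totalDegree_apply_X_le_polyDeg φ)
      (totalDegree_X i).le (by simpa only [Fintype.card_fin, mul_one] using choose_lt)
  exact exists_monic_natDegree_eq_totalDegree_coeff_le φ_injective (hφ _) P_ne_zero hP
    P_natDegree P_coeff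

theorem polynomial_integral_iff_bounded_monic_equations_general [IsIntegrallyClosed K] :
    (∀ b : MvPolynomial (Fin n) K, ∃ F : (MvPolynomial (Fin n) K)[X],
        F.Monic ∧ (∀ k, F.coeff k ∈ φ.range) ∧ Polynomial.eval b F = 0)
      ↔
    (∀ i : Fin n, ∃ F : (MvPolynomial (Fin n) K)[X],
        F.Monic ∧ F.natDegree = polyDeg φ ^ n ∧
        (∀ k, ∃ b : MvPolynomial (Fin n) K,
          b.totalDegree ≤ 2 ^ n * polyDeg φ ^ (n - 1) * (n + polyDeg φ ^ n) ∧
          F.coeff k = φ b) ∧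
        Polynomial.eval (X i) F = 0) := by
  constructor
  · intro hint i
    obtain ⟨Q, Q_monic, Q_natDegree, Q_coeff, hQ⟩ := exists_bounded_monic_of_isIntegral φ
      (fun b => isIntegralElem_iff_exists_monic_coeff_mem_range.2 (hint b)) i
    exact ⟨Q.map φ, Q_monic.map _, (Q_monic.natDegree_map _).trans Q_natDegree,
      fun k => ⟨Q.coeff k, Q_coeff k, Q.coeff_map _ k⟩, (Q.eval_map _ _).trans hQ⟩
  · intro hX b
    refine isIntegralElem_iff_exists_monic_coeff_mem_range.1
      (isIntegral_of_forall_isIntegralElem_X φ (fun i => ?_) b)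
    obtain ⟨F, F_monic, -, F_coeff, hF⟩ := hX i
    exact isIntegralElem_iff_exists_monic_coeff_mem_range.2 ⟨F, F_monic, fun k =>
      let ⟨a, _, ha⟩ := F_coeff k
      ⟨a, ha.symm⟩, hF⟩

end Endomorphism

open MvPolynomial in
/-- Let `K` be a field, `B = K[x_1, …, x_n]` with `n > 0`, `φ : B → B` a
`K`-algebra endomorphism with `A = φ(B)`, and set `m = 2^n deg(φ)^{n−1} (n + deg(φ)^n)`.
The following are equivalent: (i) `φ` is integral, i.e. `B` is integral over `A`; (ii) for
each `i` there is a nonzero monic polynomial `F_i ∈ A[T]` of degree `deg(φ)^n` with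
coefficients in `φ(B_{≤m})` such that `F_i(x_i) = 0`. -/
theorem polynomial_integral_iff_bounded_monic_equations (K : Type*) [Field K] (n : ℕ)
    (hn : 0 < n) (φ : MvPolynomial (Fin n) K →ₐ[K] MvPolynomial (Fin n) K) :
    (∀ b : MvPolynomial (Fin n) K, ∃ F : Polynomial (MvPolynomial (Fin n) K),
        F.Monic ∧ (∀ k, F.coeff k ∈ φ.range) ∧ Polynomial.eval b F = 0)
      ↔
    (∀ i : Fin n, ∃ F : Polynomial (MvPolynomial (Fin n) K),
        F.Monic ∧ F.natDegree = polyDeg φ ^ n ∧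
        (∀ k, ∃ b : MvPolynomial (Fin n) K,
          b.totalDegree ≤ 2 ^ n * polyDeg φ ^ (n - 1) * (n + polyDeg φ ^ n) ∧
          F.coeff k = φ b) ∧
        Polynomial.eval (X i) F = 0) := by
  exact polynomial_integral_iff_bounded_monic_equations_general φ
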